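/- arXiv:2212.12900 — 3 statements merged into one kernel-verified Lean document; each statement's English description precedes it below -/
import Mathlib

section
/- Let $R_1, R_2$ be commutative rings with unity with $|R_1| \geq 4$ and $|R_2| \geq 3$, and choose distinct $u_1, u_2 \in R_1 \setminus \{0,1\}$ and $v \in R_2 \setminus \{0,1\}$. Then $\Gamma'(R_1 \times R_2 \times \mathbb{Z}_2)$ contains $K_{8,4}$ as a subgraph, with parts $\{(0,1,0), (1,1,0), (u_1,1,0), (u_2,1,0), (0,v,0), (1,v,0), (u_1,v,0), (u_2,v,0)\}$ and $\{(0,0,1), (1,0,1), (u_1,0,1), (u_2,0,1)\}$. -/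
/-- Adjacency in the cozero-divisor graph `Γ'(R)`: both elements are vertices
(non-zero non-units) and neither lies in the principal ideal generated by the
other. -/
def cozeroAdj {R : Type*} [CommRing R] (x y : R) : Prop :=
  (x ≠ 0 ∧ ¬ IsUnit x) ∧ (y ≠ 0 ∧ ¬ IsUnit y) ∧
    x ∉ Ideal.span {y} ∧ y ∉ Ideal.span {x}

/-!
Being a non-zero non-unit is automatic once neither of two elements divides the other. A ring
homomorphism that kills `y` but not `x` shows that `y` does not divide `x`; in
`R₁ × R₂ × ℤ₂` the projections to the second and third factors do this for the two parts.
-/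

section Adjacency

variable {R S T : Type*} [CommRing R] [CommRing S] [CommRing T] {x y : R}

theorem cozeroAdj_iff_notMem_span :
    cozeroAdj x y ↔ x ∉ Ideal.span {y} ∧ y ∉ Ideal.span {x} := by
  refine ⟨fun h => h.2.2, fun h => ?_⟩
  have ne_zero_of_notMem {a b : R} (hab : a ∉ Ideal.span {b}) : a ≠ 0 := by
    rintro rfl
    exact hab (Ideal.zero_mem _)
  have not_isUnit_of_notMem {a b : R} (hab : a ∉ Ideal.span {b}) : ¬ IsUnit b := fun hb =>
    hab (Ideal.mem_span_singleton.2 hb.dvd)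
  exact ⟨⟨ne_zero_of_notMem h.1, not_isUnit_of_notMem h.2⟩,
    ⟨ne_zero_of_notMem h.2, not_isUnit_of_notMem h.1⟩, h⟩

theorem cozeroAdj.ne (h : cozeroAdj x y) : x ≠ y := by
  rintro rfl
  exact h.2.2.1 (Ideal.mem_span_singleton_self x)

theorem notMem_span_singleton_of_map_ne_zero (f : R →+* S) (hx : f x ≠ 0) (hy : f y = 0) :
    x ∉ Ideal.span {y} := fun hxy =>
  hx (zero_dvd_iff.1 (hy ▸ map_dvd f (Ideal.mem_span_singleton.1 hxy)))

theorem cozeroAdj_of_map_eq_zero (f : R →+* S) (g : R →+* T)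
    (hfx : f x ≠ 0) (hfy : f y = 0) (hgx : g x = 0) (hgy : g y ≠ 0) : cozeroAdj x y :=
  cozeroAdj_iff_notMem_span.2 ⟨notMem_span_singleton_of_map_ne_zero f hfx hfy,
    notMem_span_singleton_of_map_ne_zero g hgy hgx⟩

theorem cozeroAdj_prodMk_of_ne_zero (a b : R) {s : S} {t : T} (hs : s ≠ 0) (ht : t ≠ 0) :
    cozeroAdj (a, s, (0 : T)) (b, (0 : S), t) :=
  cozeroAdj_of_map_eq_zero ((RingHom.fst S T).comp (RingHom.snd R (S × T)))
    ((RingHom.snd S T).comp (RingHom.snd R (S × T))) hs rfl rfl ht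

end Adjacency

theorem injective_prodMk_modNat_divNat {α β γ : Type*} {m n : ℕ} {a : Fin n → α}
    {b : Fin m → β} (ha : Function.Injective a) (hb : Function.Injective b) (c : γ) :
    Function.Injective fun i : Fin (m * n) => (a i.modNat, b i.divNat, c) := by
  intro i j hij
  simp only [Prod.mk.injEq, and_true] at hij
  exact finProdFinEquiv.symm.injective (Prod.ext (hb hij.2) (ha hij.1))

theorem stmt3_general {R₁ R₂ S : Type*} [CommRing R₁] [CommRing R₂] [CommRing S] [Nontrivial S]
    {u₁ u₂ : R₁} (hu₁0 : u₁ ≠ 0) (hu₁1 : u₁ ≠ 1) (hu₂0 : u₂ ≠ 0) (hu₂1 : u₂ ≠ 1)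
    (hu : u₁ ≠ u₂) {v : R₂} (hv0 : v ≠ 0) (hv1 : v ≠ 1)
    {A : Fin 8 → R₁ × R₂ × S} {B : Fin 4 → R₁ × R₂ × S}
    (hA : A = ![(0, 1, 0), (1, 1, 0), (u₁, 1, 0), (u₂, 1, 0),
                (0, v, 0), (1, v, 0), (u₁, v, 0), (u₂, v, 0)])
    (hB : B = ![(0, 0, 1), (1, 0, 1), (u₁, 0, 1), (u₂, 0, 1)]) :
    Function.Injective A ∧ Function.Injective B ∧ (∀ i j, A i ≠ B j) ∧
      ∀ i j, cozeroAdj (A i) (B j) := by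
  have : Nontrivial R₁ := ⟨u₁, 0, hu₁0⟩
  have : Nontrivial R₂ := ⟨v, 0, hv0⟩
  let a : Fin 4 → R₁ := ![0, 1, u₁, u₂]
  let b : Fin 2 → R₂ := ![1, v]
  have ha : Function.Injective a := by
    simp [a, Function.Injective, Fin.forall_fin_succ, hu₁0, hu₁1, hu₂0, hu₂1, hu,
      hu₁0.symm, hu₁1.symm, hu₂0.symm, hu₂1.symm, hu.symm]
  have hb : Function.Injective b := by
    simp [b, Function.Injective, hv1, hv1.symm]
  have hb0 : ∀ k, b k ≠ 0 := Fin.forall_fin_two.2 ⟨one_ne_zero, hv0⟩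
  obtain rfl : A = fun i : Fin (2 * 4) => (a i.modNat, b i.divNat, 0) := by
    rw [hA]; ext i : 1; fin_cases i <;> rfl
  obtain rfl : B = fun j => (a j, 0, 1) := by
    rw [hB]; ext j : 1; fin_cases j <;> rfl
  have hadj (i : Fin (2 * 4)) (j : Fin 4) :
      cozeroAdj (a i.modNat, b i.divNat, (0 : S)) (a j, (0 : R₂), (1 : S)) :=
    cozeroAdj_prodMk_of_ne_zero _ _ (hb0 _) one_ne_zero
  exact ⟨injective_prodMk_modNat_divNat ha hb 0, fun i j hij => ha (congrArg Prod.fst hij),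
    fun i j => (hadj i j).ne, hadj⟩

/-- Let `R₁, R₂` be commutative rings with unity with `|R₁| ≥ 4`, `|R₂| ≥ 3`,
distinct `u₁, u₂ ∈ R₁ \ {0,1}` and `v ∈ R₂ \ {0,1}`.  Then
`Γ'(R₁ × R₂ × ℤ₂)` contains `K_{8,4}` as a subgraph with the indicated parts. -/
theorem stmt3 (R₁ R₂ : Type*) [CommRing R₁] [CommRing R₂]
    (hc₁ : 4 ≤ Cardinal.mk R₁) (hc₂ : 3 ≤ Cardinal.mk R₂)
    (u₁ u₂ : R₁) (hu₁0 : u₁ ≠ 0) (hu₁1 : u₁ ≠ 1) (hu₂0 : u₂ ≠ 0) (hu₂1 : u₂ ≠ 1)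
    (hu : u₁ ≠ u₂)
    (v : R₂) (hv0 : v ≠ 0) (hv1 : v ≠ 1)
    (A : Fin 8 → R₁ × R₂ × ZMod 2) (B : Fin 4 → R₁ × R₂ × ZMod 2)
    (hA : A = ![(0, 1, 0), (1, 1, 0), (u₁, 1, 0), (u₂, 1, 0),
                (0, v, 0), (1, v, 0), (u₁, v, 0), (u₂, v, 0)])
    (hB : B = ![(0, 0, 1), (1, 0, 1), (u₁, 0, 1), (u₂, 0, 1)]) :
    Function.Injective A ∧ Function.Injective B ∧ (∀ i j, A i ≠ B j) ∧
      ∀ i j, cozeroAdj (A i) (B j) := by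
  exact stmt3_general hu₁0 hu₁1 hu₂0 hu₂1 hu hv0 hv1 hA hB
end

section
/- Let $R_1$ be a commutative local ring with unity whose maximal ideal is principal, generated by $a$, with nilpotent index $8$ (i.e., $a^7 \neq 0$ and $a^8 = 0$), and let $F$ be a field. Then $\Gamma_r(R_1 \times F)$ contains $K_{3,3}$ as a subgraph, with parts $\{(a^6)\times F,\ (a^7)\times F,\ (0)\times F\}$ and $\{R_1\times(0),\ (a^4)\times(0),\ (a^5)\times(0)\}$. -/
/-- Adjacency in the reduced cozero-divisor graph `Γ_r(R)`:
the two ideals are nontrivial principal ideals (vertices of the graph),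
they are distinct, and neither is properly contained in the other. -/
def redCozeroAdj {R : Type*} [CommRing R] (I J : Ideal R) : Prop :=
  (I.IsPrincipal ∧ I ≠ ⊥ ∧ I ≠ ⊤) ∧ (J.IsPrincipal ∧ J ≠ ⊥ ∧ J ≠ ⊤) ∧
    I ≠ J ∧ ¬ I < J ∧ ¬ J < I

/-!
For `S ≠ 0`, the ideals `(x) × S` and `(y) × 0` are incomparable as soon as `x` does not divide `y`,
and incomparable principal ideals are automatically nontrivial. Up to the nilpotency class of `a`
the powers of `a` generate a strictly descending chain, so a larger power never divides a smaller
one: every `(a ^ m) × S` is adjacent to every `(a ^ n) × 0` with `n < m`.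
-/

theorem pow_dvd_pow_iff_of_le_nilpotencyClass {M : Type*} [CommMonoidWithZero M] {a : M}
    {m n : ℕ} (ha : IsNilpotent a) (hn : n ≤ nilpotencyClass a) : a ^ n ∣ a ^ m ↔ n ≤ m := by
  refine ⟨fun hdvd => ?_, pow_dvd_pow a⟩
  by_contra! hmn
  have hzero : a ^ (m + (nilpotencyClass a - n)) = 0 := by
    have hmul := mul_dvd_mul_right hdvd (a ^ (nilpotencyClass a - n))
    rwa [← pow_add, ← pow_add, Nat.add_sub_cancel' hn, pow_nilpotencyClass ha,
      zero_dvd_iff] at hmul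
  have hle : nilpotencyClass a ≤ m + (nilpotencyClass a - n) := csInf_le' hzero
  omega

theorem redCozeroAdj_iff {R : Type*} [CommRing R] {I J : Ideal R} :
    redCozeroAdj I J ↔ I.IsPrincipal ∧ J.IsPrincipal ∧ ¬ I ≤ J ∧ ¬ J ≤ I := by
  constructor
  · rintro ⟨⟨hI, -, -⟩, ⟨hJ, -, -⟩, hne, hIJ, hJI⟩
    exact ⟨hI, hJ, fun h => hIJ (h.lt_of_ne hne), fun h => hJI (h.lt_of_ne' hne)⟩
  · rintro ⟨hI, hJ, hIJ, hJI⟩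
    refine ⟨⟨hI, ?_, ?_⟩, ⟨hJ, ?_, ?_⟩, fun h => hIJ h.le, fun h => hIJ h.le,
      fun h => hJI h.le⟩
    · rintro rfl
      exact hIJ bot_le
    · rintro rfl
      exact hJI le_top
    · rintro rfl
      exact hJI bot_le
    · rintro rfl
      exact hIJ le_top

theorem redCozeroAdj_span_singleton_iff {R : Type*} [CommRing R] {x y : R} :
    redCozeroAdj (Ideal.span {x}) (Ideal.span {y}) ↔ ¬ y ∣ x ∧ ¬ x ∣ y := by
  simp only [redCozeroAdj_iff, Ideal.span_singleton_le_span_singleton]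
  exact ⟨fun h => h.2.2, fun h => ⟨⟨x, rfl⟩, ⟨y, rfl⟩, h⟩⟩

section Product

variable {R S : Type*} [CommRing R] [CommRing S]

theorem redCozeroAdj_span_mk_one_span_mk_zero_iff [Nontrivial S] {x y : R} :
    redCozeroAdj (Ideal.span {(x, (1 : S))}) (Ideal.span {(y, (0 : S))}) ↔ ¬ x ∣ y := by
  simp [redCozeroAdj_span_singleton_iff, prod_dvd_iff]

theorem injOn_span_pow_mk {a : R} (ha : IsNilpotent a) (u : S) :
    Set.InjOn (fun n : ℕ => Ideal.span {(a ^ n, u)}) (Set.Iic (nilpotencyClass a)) := by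
  have le_of_span_le {m n : ℕ} (hn : n ≤ nilpotencyClass a)
      (h : Ideal.span {(a ^ m, u)} ≤ Ideal.span {(a ^ n, u)}) : n ≤ m := by
    rw [Ideal.span_singleton_le_span_singleton, prod_dvd_iff] at h
    exact (pow_dvd_pow_iff_of_le_nilpotencyClass ha hn).1 h.1
  intro m hm n hn h
  exact le_antisymm (le_of_span_le hm h.ge) (le_of_span_le hn h.le)

theorem stmt12_general [Nontrivial S] {ι κ : Type*} {a : R} (ha : IsNilpotent a)
    {e : ι → ℕ} {f : κ → ℕ} (he : Function.Injective e) (hf : Function.Injective f)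
    (he_le : ∀ i, e i ≤ nilpotencyClass a) (hf_le : ∀ j, f j ≤ nilpotencyClass a)
    (hfe : ∀ i j, f j < e i) {A : ι → Ideal (R × S)} {B : κ → Ideal (R × S)}
    (hA : ∀ i, A i = Ideal.span {(a ^ e i, 1)}) (hB : ∀ j, B j = Ideal.span {(a ^ f j, 0)}) :
    Function.Injective A ∧ Function.Injective B ∧ (∀ i j, A i ≠ B j) ∧
      ∀ i j, redCozeroAdj (A i) (B j) := by
  obtain rfl : A = fun i => Ideal.span {(a ^ e i, 1)} := funext hA
  obtain rfl : B = fun j => Ideal.span {(a ^ f j, 0)} := funext hB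
  have adj (i : ι) (j : κ) :
      redCozeroAdj (Ideal.span {(a ^ e i, (1 : S))}) (Ideal.span {(a ^ f j, 0)}) := by
    rw [redCozeroAdj_span_mk_one_span_mk_zero_iff,
      pow_dvd_pow_iff_of_le_nilpotencyClass ha (he_le i), not_le]
    exact hfe i j
  exact ⟨fun i i' h => he (injOn_span_pow_mk ha 1 (he_le i) (he_le i') h),
    fun j j' h => hf (injOn_span_pow_mk ha 0 (hf_le j) (hf_le j') h),
    fun i j => (adj i j).2.2.1, adj⟩

end Product

/-- Let `R₁` be a commutative local ring whose maximal ideal is principal,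
generated by `a`, with nilpotent index `8`, and let `F` be a field.  Then
`Γ_r(R₁ × F)` contains `K_{3,3}` as a subgraph with parts
`{(a⁶)×F, (a⁷)×F, (0)×F}` and `{R₁×(0), (a⁴)×(0), (a⁵)×(0)}`. -/
theorem stmt12 (R₁ F : Type*) [CommRing R₁] [IsLocalRing R₁] [Field F]
    (a : R₁) (hmax : IsLocalRing.maximalIdeal R₁ = Ideal.span {a})
    (h7 : a ^ 7 ≠ 0) (h8 : a ^ 8 = 0)
    (A B : Fin 3 → Ideal (R₁ × F))
    (hA : A = ![Ideal.span {(a ^ 6, (1 : F))}, Ideal.span {(a ^ 7, (1 : F))},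
                Ideal.span {((0 : R₁), (1 : F))}])
    (hB : B = ![Ideal.span {((1 : R₁), (0 : F))}, Ideal.span {(a ^ 4, (0 : F))},
                Ideal.span {(a ^ 5, (0 : F))}]) :
    Function.Injective A ∧ Function.Injective B ∧ (∀ i j, A i ≠ B j) ∧
      ∀ i j, redCozeroAdj (A i) (B j) := by
  have hclass : nilpotencyClass a = 8 := nilpotencyClass_eq_succ_iff.2 ⟨h8, h7⟩
  -- `(0) × F` and `R₁ × (0)` arise from the exponents `8` and `0`.
  refine stmt12_general ⟨8, h8⟩ (e := ![6, 7, 8]) (f := ![0, 4, 5]) (by decide) (by decide)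
    (by rw [hclass]; decide) (by rw [hclass]; decide) (by decide) ?_ ?_
  · simp [hA, Fin.forall_fin_succ, h8]
  · simp [hB, Fin.forall_fin_succ]
end

section
/- Let $R_1, R_2$ be commutative local rings with unity whose maximal ideals are principal, generated by $a$ and $b$ respectively, with nilpotent indices $5$ and $2$ (i.e., $a^4 \neq 0$, $a^5 = 0$, $b \neq 0$, $b^2 = 0$). Then $\Gamma_r(R_1 \times R_2)$ contains $K_{3,3}$ as a subgraph, with parts $\{(a)\times(0),\ (a^2)\times(0),\ R_1\times(0)\}$ and $\{(0)\times R_2,\ (a^3)\times(b),\ (a^4)\times(b)\}$. -/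
/-! Inclusion of principal ideals of `R₁ × R₂` is reversed componentwise divisibility, so adjacency
means that neither generator divides the other. An ideal `(x) × (0)` never contains `(u) × (v)` with
`v ≠ 0`; conversely, if `x` is one of `1, a, a²` and `a³ ∣ u`, then `u ∣ x` would make the chain
`(1) ⊇ (a) ⊇ (a²) ⊇ ⋯` stationary before `(a⁴)`, whereas `(a⁵) = (0) ≠ (a⁴)`. -/

theorem pow_dvd_pow_iff_of_not_pow_succ_dvd {M : Type*} [Monoid M] {a : M} {k m n : ℕ}
    (hk : ¬ a ^ (k + 1) ∣ a ^ k) (hn : n ≤ k) : a ^ m ∣ a ^ n ↔ m ≤ n := by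
  refine ⟨fun hdvd ↦ ?_, pow_dvd_pow a⟩
  by_contra! hlt
  refine hk ?_
  calc a ^ (k + 1) ∣ a ^ (k - n + m) := pow_dvd_pow a (by lia)
    _ = a ^ (k - n) * a ^ m := pow_add a (k - n) m
    _ ∣ a ^ (k - n) * a ^ n := mul_dvd_mul_left _ hdvd
    _ = a ^ k := pow_sub_mul_pow a hn

theorem injective_vec_three_iff {α : Type*} {x y z : α} :
    Function.Injective ![x, y, z] ↔ x ≠ y ∧ x ≠ z ∧ y ≠ z := by
  rw [← List.nodup_ofFn]
  simp [and_assoc]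

theorem redCozeroAdj_iff_incompRel {R : Type*} [CommRing R] {I J : Ideal R} :
    redCozeroAdj I J ↔ I.IsPrincipal ∧ J.IsPrincipal ∧ IncompRel (· ≤ ·) I J := by
  constructor
  · rintro ⟨⟨hI, -, -⟩, ⟨hJ, -, -⟩, hne, hIJ, hJI⟩
    exact ⟨hI, hJ, fun hle ↦ hIJ (hle.lt_of_ne hne), fun hle ↦ hJI (hle.lt_of_ne' hne)⟩
  · rintro ⟨hI, hJ, hIJ, hJI⟩
    exact ⟨⟨hI, fun h ↦ hIJ (h ▸ bot_le), fun h ↦ hJI (h ▸ le_top)⟩,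
      ⟨hJ, fun h ↦ hJI (h ▸ bot_le), fun h ↦ hIJ (h ▸ le_top)⟩,
      fun h ↦ hIJ h.le, fun h ↦ hIJ h.le, fun h ↦ hJI h.le⟩

section Prod

variable {R₁ R₂ : Type*} [CommRing R₁] [CommRing R₂] {x u : R₁} {y v : R₂}

theorem span_singleton_mk_le_span_singleton_mk :
    Ideal.span {(x, y)} ≤ Ideal.span {(u, v)} ↔ u ∣ x ∧ v ∣ y := by
  rw [Ideal.span_singleton_le_span_singleton, Prod.mk_dvd_mk]

theorem span_singleton_mk_ne_of_not_dvd_fst (h : ¬ u ∣ x) :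
    Ideal.span {(x, y)} ≠ Ideal.span {(u, v)} :=
  fun heq ↦ h (span_singleton_mk_le_span_singleton_mk.mp heq.le).1

theorem redCozeroAdj_span_singleton_mk_zero (hux : ¬ u ∣ x) (hv : v ≠ 0) :
    redCozeroAdj (Ideal.span {(x, (0 : R₂))}) (Ideal.span {(u, v)}) := by
  refine redCozeroAdj_iff_incompRel.mpr ⟨⟨_, rfl⟩, ⟨_, rfl⟩, fun hle ↦ hux ?_, fun hle ↦ hv ?_⟩
  · exact (span_singleton_mk_le_span_singleton_mk.mp hle).1
  · exact zero_dvd_iff.mp (span_singleton_mk_le_span_singleton_mk.mp hle).2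

theorem injective_span_singleton_pow_mk {ι : Type*} {a : R₁} {k : ℕ} {e : ι → ℕ}
    (y : ι → R₂) (hk : ¬ a ^ (k + 1) ∣ a ^ k) (he : Function.Injective e)
    (hek : ∀ i, e i ≤ k) :
    Function.Injective fun i ↦ Ideal.span {(a ^ e i, y i)} := by
  have exponent_le {i j : ι} (hij : Ideal.span {(a ^ e i, y i)} ≤ Ideal.span {(a ^ e j, y j)}) :
      e j ≤ e i :=
    (pow_dvd_pow_iff_of_not_pow_succ_dvd hk (hek i)).mp
      (span_singleton_mk_le_span_singleton_mk.mp hij).1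
  exact fun i j hij ↦ he (le_antisymm (exponent_le hij.ge) (exponent_le hij.le))

end Prod

theorem stmt13_general {R₁ R₂ : Type*} [CommRing R₁] [CommRing R₂]
    {a : R₁} (ha : ¬ a ^ 5 ∣ a ^ 4) {b : R₂} (hb : b ≠ 0)
    {A B : Fin 3 → Ideal (R₁ × R₂)}
    (hA : A = ![Ideal.span {(a, (0 : R₂))}, Ideal.span {(a ^ 2, (0 : R₂))},
                Ideal.span {((1 : R₁), (0 : R₂))}])
    (hB : B = ![Ideal.span {((0 : R₁), (1 : R₂))}, Ideal.span {(a ^ 3, b)},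
                Ideal.span {(a ^ 4, b)}]) :
    Function.Injective A ∧ Function.Injective B ∧ (∀ i j, A i ≠ B j) ∧
      ∀ i j, redCozeroAdj (A i) (B j) := by
  have not_dvd {m n : ℕ} (hn : n ≤ 4) (hnm : n < m) : ¬ a ^ m ∣ a ^ n := by
    rwa [pow_dvd_pow_iff_of_not_pow_succ_dvd ha hn, not_le]
  have not_zero_dvd {n : ℕ} (hn : n ≤ 4) : ¬ 0 ∣ a ^ n :=
    fun h ↦ not_dvd hn (Nat.lt_succ_of_le hn) ((dvd_zero _).trans h)
  have A_eq : A = fun i ↦ Ideal.span {(a ^ (![1, 2, 0] i : ℕ), (0 : R₂))} := by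
    ext1 i
    fin_cases i <;> simp [hA]
  have B_form (j : Fin 3) : ∃ u v, a ^ 3 ∣ u ∧ v ≠ 0 ∧ B j = Ideal.span {(u, v)} := by
    have : Nontrivial R₂ := nontrivial_of_ne b 0 hb
    subst hB
    fin_cases j
    exacts [⟨0, 1, dvd_zero _, one_ne_zero, rfl⟩, ⟨a ^ 3, b, dvd_rfl, hb, rfl⟩,
      ⟨a ^ 4, b, pow_dvd_pow a (by simp), hb, rfl⟩]
  have A_injective : Function.Injective A := by
    rw [A_eq]
    exact injective_span_singleton_pow_mk _ ha (by decide) (by decide)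
  have B_injective : Function.Injective B := by
    rw [hB, injective_vec_three_iff]
    exact ⟨(span_singleton_mk_ne_of_not_dvd_fst (not_zero_dvd (by simp))).symm,
      (span_singleton_mk_ne_of_not_dvd_fst (not_zero_dvd (by simp))).symm,
      span_singleton_mk_ne_of_not_dvd_fst (not_dvd (by simp) (by simp))⟩
  have adj (i j : Fin 3) : redCozeroAdj (A i) (B j) := by
    have exponent_le : ∀ i, (![1, 2, 0] i : ℕ) ≤ 2 := by decide
    obtain ⟨u, v, hu, hv, hBj⟩ := B_form j
    rw [A_eq, hBj]
    refine redCozeroAdj_span_singleton_mk_zero (fun hdvd ↦ ?_) hv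
    exact not_dvd ((exponent_le i).trans (by simp)) (Nat.lt_succ_of_le (exponent_le i))
      (hu.trans hdvd)
  exact ⟨A_injective, B_injective, fun i j ↦ (adj i j).2.2.1, adj⟩

/-- Let `R₁, R₂` be commutative local rings whose maximal ideals are principal,
generated by `a` resp. `b`, with nilpotent indices `5` and `2`.  Then
`Γ_r(R₁ × R₂)` contains `K_{3,3}` as a subgraph with parts
`{(a)×(0), (a²)×(0), R₁×(0)}` and `{(0)×R₂, (a³)×(b), (a⁴)×(b)}`. -/
theorem stmt13 (R₁ R₂ : Type*) [CommRing R₁] [CommRing R₂]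
    [IsLocalRing R₁] [IsLocalRing R₂]
    (a : R₁) (hmaxa : IsLocalRing.maximalIdeal R₁ = Ideal.span {a})
    (ha4 : a ^ 4 ≠ 0) (ha5 : a ^ 5 = 0)
    (b : R₂) (hmaxb : IsLocalRing.maximalIdeal R₂ = Ideal.span {b})
    (hb1 : b ≠ 0) (hb2 : b ^ 2 = 0)
    (A B : Fin 3 → Ideal (R₁ × R₂))
    (hA : A = ![Ideal.span {(a, (0 : R₂))}, Ideal.span {(a ^ 2, (0 : R₂))},
                Ideal.span {((1 : R₁), (0 : R₂))}])
    (hB : B = ![Ideal.span {((0 : R₁), (1 : R₂))}, Ideal.span {(a ^ 3, b)},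
                Ideal.span {(a ^ 4, b)}]) :
    Function.Injective A ∧ Function.Injective B ∧ (∀ i j, A i ≠ B j) ∧
      ∀ i j, redCozeroAdj (A i) (B j) := by
  exact stmt13_general (by rwa [ha5, zero_dvd_iff]) hb1 hA hB
end
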